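/- arXiv:1012.3833 — 2 statements merged into one kernel-verified Lean document; each statement's English description precedes it below -/
import Mathlib

section
/- Let p be an odd prime. If p \equiv 1 (mod 4), then \sum_{k=0}^{(p-1)/2} k^2 \binom{2k}{k}^2 / 32^k \equiv (-1)^{(p+3)/4} 2^{-(p-1)/2} ((p+3)/2)! / ( ((p-5)/4)! ((p+3)/4)! ) \pmod{p^2}. If p \equiv 3 (mod 4), then \sum_{k=0}^{(p-1)/2} k^2 \binom{2k}{k}^2 / 32^k \equiv (-1)^{(p+1)/4} 2^{-(p-1)/2} ((p+1)/2)! / ( ((p-3)/4)! ((p+1)/4)! ) \pmod{p^2}. -/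
open Finset

/-- `a ≡ b (mod p^k)` as rationals: `a - b` is `p^k` times a `p`-integral rational. -/
def ratCongr (p k : ℕ) (a b : ℚ) : Prop :=
  ∃ c : ℚ, a - b = (p : ℚ) ^ k * c ∧ ¬ (p ∣ c.den)

/-!
Write `n = (p - 1) / 2`. Modulo `p ^ 2` the number `binom(2k, k) ^ 2 / 16 ^ k` is the coefficient
of `x ^ k` in the shifted Legendre polynomial `P n`: up to the common factor `4 ^ k * k! ^ 2`, the
two are `∏ j < k, (2j + 1) ^ 2` and `∏ j < k, ((2j + 1) ^ 2 - p ^ 2)`. Hence the sum is congruent to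
`((x d/dx) ^ 2 P n) (1/2) = P n' (1/2) / 2 + P n'' (1/2) / 4`. By Rodrigues' formula
`n! * P n = (d/dx) ^ n (x - x ^ 2) ^ n`, and `x - x ^ 2 = 1/4 - (x - 1/2) ^ 2`, so the Taylor
coefficients of `P n` at `1/2` are explicit. Those whose index has the parity opposite to `n`
vanish, so one derivative survives: the second for `n` even, the first for `n` odd.
-/

namespace ratCongr

variable {p k : ℕ}

protected theorem add {a b c d : ℚ} (hp : p.Prime) (hab : ratCongr p k a b)
    (hcd : ratCongr p k c d) : ratCongr p k (a + c) (b + d) := by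
  obtain ⟨x, hx, hx_den⟩ := hab
  obtain ⟨y, hy, hy_den⟩ := hcd
  exact ⟨x + y, by linear_combination hx + hy,
    fun h => (hp.dvd_mul.1 (h.trans (Rat.add_den_dvd x y))).elim hx_den hy_den⟩

protected theorem sum {ι : Type*} {s : Finset ι} {f g : ι → ℚ} (hp : p.Prime)
    (h : ∀ i ∈ s, ratCongr p k (f i) (g i)) : ratCongr p k (∑ i ∈ s, f i) (∑ i ∈ s, g i) := by
  induction s using Finset.cons_induction with
  | empty => exact ⟨0, by simp, by simpa using hp.ne_one⟩
  | cons i s hi ih =>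
    rw [sum_cons, sum_cons]
    exact (h i (mem_cons_self i s)).add hp (ih fun j hj => h j (mem_cons_of_mem hj))

theorem intCast_div {a b m : ℤ} (h : a ≡ b [ZMOD (p : ℤ) ^ k]) (hm : ¬ (p : ℤ) ∣ m) :
    ratCongr p k (a / m) (b / m) := by
  obtain ⟨d, hd⟩ := h.symm.dvd
  have h_den : (((d : ℚ) / m).den : ℤ) ∣ m := Rat.divInt_eq_div d m ▸ Rat.den_dvd d m
  have h_sub : (a : ℚ) - b = p ^ k * d := mod_cast hd
  exact ⟨d / m, by rw [← sub_div, h_sub, mul_div_assoc],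
    fun h_dvd => hm ((Int.natCast_dvd_natCast.2 h_dvd).trans h_den)⟩

end ratCongr

section

open Polynomial

section CommSemiring

variable {R : Type*} [CommSemiring R]

theorem sum_sq_mul_coeff_mul_pow (f : R[X]) (x : R) {N : ℕ} (hN : f.natDegree < N) :
    ∑ k ∈ range N, (k : R) ^ 2 * f.coeff k * x ^ k =
      x * (taylor x f).coeff 1 + 2 * x ^ 2 * (taylor x f).coeff 2 := by
  have h_two : 2 * (taylor x f).coeff 2 = (derivative (derivative f)).eval x := by
    have := congrArg (fun D : R[X] → R[X] => (D f).eval x) (factorial_smul_hasseDeriv (R := R) 2)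
    simpa [taylor_coeff, two_smul, two_mul] using this
  have h_rhs : x * (taylor x f).coeff 1 + 2 * x ^ 2 * (taylor x f).coeff 2 =
      x * (derivative f).eval x + x ^ 2 * (derivative (derivative f)).eval x := by
    rw [taylor_coeff_one, ← h_two]
    ring
  rw [h_rhs]
  conv_rhs => rw [f.as_sum_range' N hN]
  simp only [derivative_sum, derivative_monomial, eval_finsetSum, eval_monomial, mul_sum,
    ← sum_add_distrib]
  refine sum_congr rfl fun k _ => ?_
  rcases k with _ | _ | k
  · simp
  · simp [mul_comm]
  · push_cast [Nat.add_sub_cancel]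
    ring

theorem taylor_iterate_derivative (f : R[X]) (r : R) (n : ℕ) :
    taylor r (derivative^[n] f) = derivative^[n] (taylor r f) := by
  have h : Function.Semiconj (taylor r) (derivative (R := R)) derivative := fun g => by
    simp [taylor_apply, derivative_comp]
  exact h.iterate_right n f

end CommSemiring

section CommRing

variable {R : Type*} [CommRing R]

theorem coeff_C_sub_X_sq_pow_two_mul (a : R) (i m : ℕ) :
    ((C a - X ^ 2) ^ (i + m) : R[X]).coeff (2 * i) = (-1) ^ i * a ^ m * (i + m).choose i := by
  have h_expand : ((C a - X ^ 2) ^ (i + m) : R[X]) =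
      (-1) ^ (i + m) * expand R 2 ((X + C (-a)) ^ (i + m)) := by
    simp [← mul_pow, sub_eq_add_neg, add_comm]
  have h_sign : (-1 : R) ^ m * (-1) ^ m = 1 := by rw [← mul_pow, neg_one_mul, neg_neg, one_pow]
  rw [h_expand, ← C_1, ← C_neg, ← C_pow, coeff_C_mul, coeff_expand_mul' two_pos,
    coeff_X_add_C_pow, Nat.add_sub_cancel_left, neg_pow a, pow_add]
  linear_combination (-1) ^ i * a ^ m * (i + m).choose i * h_sign

theorem coeff_C_sub_X_sq_pow_of_odd (a : R) (n : ℕ) {j : ℕ} (hj : Odd j) :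
    ((C a - X ^ 2) ^ n : R[X]).coeff j = 0 := by
  have h_expand : ((C a - X ^ 2) ^ n : R[X]) = expand R 2 ((C a - X) ^ n) := by simp
  rw [h_expand, coeff_expand two_pos, if_neg hj.not_two_dvd_nat]

end CommRing

theorem two_pow_mul_prod_odd (k : ℕ) :
    2 ^ k * ∏ j ∈ range k, (2 * j + 1) = k.factorial * k.centralBinom := by
  induction k with
  | zero => simp
  | succ k ih =>
    rw [prod_range_succ, Nat.factorial_succ]
    linear_combination 2 * (2 * k + 1) * ih - k.factorial * k.succ_mul_centralBinom_succ

theorem succ_sq_mul_coeff_shiftedLegendre_succ (n k : ℕ) :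
    ((k : ℤ) + 1) ^ 2 * (shiftedLegendre n).coeff (k + 1) =
      -((n - k) * (n + k + 1)) * (shiftedLegendre n).coeff k := by
  have h_choose : (n.choose (k + 1) : ℤ) * (k + 1) = n.choose k * (n - k) := by
    rcases le_or_gt k n with h | h
    · exact_mod_cast n.choose_succ_right_eq k
    · simp [Nat.choose_eq_zero_of_lt h, Nat.choose_eq_zero_of_lt (h.trans k.lt_succ_self)]
  have h_add_choose : ((n + (k + 1)).choose n : ℤ) * (k + 1) = (n + k + 1) * (n + k).choose n := by
    have := (n + k).choose_mul_succ_eq n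
    rw [show n + k + 1 - n = k + 1 by omega] at this
    rw [← add_assoc, mul_comm (n + k + 1 : ℤ)]
    exact_mod_cast this.symm
  rw [coeff_shiftedLegendre, coeff_shiftedLegendre, pow_succ (-1 : ℤ) k]
  linear_combination -(-1) ^ k * ((n + (k + 1)).choose n * (k + 1) * h_choose
    + n.choose k * (n - k) * h_add_choose)

theorem prod_odd_sq_sub_sq (n k : ℕ) :
    ∏ j ∈ range k, ((2 * (j : ℤ) + 1) ^ 2 - (2 * n + 1) ^ 2) =
      4 ^ k * k.factorial ^ 2 * (shiftedLegendre n).coeff k := by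
  induction k with
  | zero => simp [coeff_shiftedLegendre]
  | succ k ih =>
    rw [prod_range_succ, ih, Nat.factorial_succ]
    push_cast
    linear_combination
      -4 ^ (k + 1) * (k.factorial : ℤ) ^ 2 * succ_sq_mul_coeff_shiftedLegendre_succ n k

theorem centralBinom_sq_modEq_coeff_shiftedLegendre {n k : ℕ}
    (h : (2 * n + 1).Coprime k.factorial) :
    (k.centralBinom : ℤ) ^ 2 ≡ 16 ^ k * (shiftedLegendre n).coeff k
      [ZMOD ((2 * n + 1 : ℕ) : ℤ) ^ 2] := by
  have h_prod : ∏ j ∈ range k, (2 * (j : ℤ) + 1) ^ 2 ≡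
      ∏ j ∈ range k, ((2 * (j : ℤ) + 1) ^ 2 - (2 * n + 1) ^ 2)
      [ZMOD ((2 * n + 1 : ℕ) : ℤ) ^ 2] :=
    .prod fun j _ => Int.modEq_iff_dvd.2 ⟨-1, by push_cast; ring⟩
  have h_odd : (2 : ℤ) ^ k * ∏ j ∈ range k, (2 * (j : ℤ) + 1) = k.factorial * k.centralBinom :=
    mod_cast two_pow_mul_prod_odd k
  have h_coprime : (((2 * n + 1 : ℕ) : ℤ) ^ 2).gcd ((k.factorial : ℤ) ^ 2) = 1 := by
    exact_mod_cast h.pow 2 2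
  suffices h_mul : (k.factorial : ℤ) ^ 2 * k.centralBinom ^ 2 ≡
      k.factorial ^ 2 * (16 ^ k * (shiftedLegendre n).coeff k)
      [ZMOD ((2 * n + 1 : ℕ) : ℤ) ^ 2] by
    rw [Int.modEq_iff_dvd, ← mul_sub] at h_mul
    exact Int.modEq_iff_dvd.2 (Int.dvd_of_dvd_mul_right_of_gcd_one h_mul h_coprime)
  convert h_prod.mul_left (4 ^ k) using 1
  · rw [prod_pow, show (4 : ℤ) = 2 ^ 2 by norm_num, pow_right_comm, ← mul_pow, ← mul_pow, h_odd]
  · rw [prod_odd_sq_sub_sq, show (16 : ℤ) = 4 * 4 by norm_num, mul_pow]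
    ring

theorem ratCongr_sum_centralBinom_sq (n : ℕ) (hp : (2 * n + 1).Prime) :
    ratCongr (2 * n + 1) 2
      (∑ k ∈ range (n + 1), (k : ℚ) ^ 2 * ((2 * k).choose k : ℚ) ^ 2 / 32 ^ k)
      (∑ k ∈ range (n + 1), (k : ℚ) ^ 2 * (shiftedLegendre n).coeff k * (1 / 2) ^ k) := by
  refine .sum hp fun k hk => ?_
  have hk_lt : k < 2 * n + 1 := by have := mem_range.1 hk; omega
  have h_modEq := (centralBinom_sq_modEq_coeff_shiftedLegendre
    (hp.coprime_factorial_of_lt hk_lt)).mul_left ((k : ℤ) ^ 2)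
  have h_not_dvd : ¬ ((2 * n + 1 : ℕ) : ℤ) ∣ 32 ^ k := by
    intro h
    have h_dvd_pow : 2 * n + 1 ∣ 2 ^ (5 * k) := by
      rw [pow_mul]
      exact_mod_cast h
    have h_dvd_two : 2 * n + 1 ∣ 2 := hp.dvd_of_dvd_pow h_dvd_pow
    have := (Nat.prime_dvd_prime_iff_eq hp Nat.prime_two).1 h_dvd_two
    omega
  convert ratCongr.intCast_div h_modEq h_not_dvd using 1
  · push_cast [Nat.centralBinom_eq_two_mul_choose]
    rfl
  · push_cast
    rw [show (32 : ℚ) = 16 * 2 by norm_num, mul_pow, one_div_pow]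
    field_simp

/-- The shifted Legendre polynomial expanded around its centre of symmetry `1 / 2`: in terms of
the classical Legendre polynomial `L n` on `[-1, 1]`, this is `L n (-2 * X)`. -/
noncomputable def centeredLegendre (n : ℕ) : ℚ[X] :=
  taylor (1 / 2) ((shiftedLegendre n).map (Int.castRingHom ℚ))

theorem factorial_mul_centeredLegendre (n : ℕ) :
    (n.factorial : ℚ[X]) * centeredLegendre n = derivative^[n] ((C (1 / 4) - X ^ 2) ^ n) := by
  have h_square : taylor (1 / 2 : ℚ) (X * (1 - X)) = C (1 / 4) - X ^ 2 := by
    have h_half : C (1 / 2 : ℚ) + C (1 / 2) = 1 := by rw [← C_add, add_halves, C_1]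
    have h_quarter : C (1 / 4 : ℚ) = C (1 / 2) * C (1 / 2) := by rw [← C_mul]; norm_num
    rw [taylor_mul, map_sub, taylor_X, taylor_one, C_1, h_quarter]
    linear_combination (-X - C (1 / 2)) * h_half
  have h_rodrigues := congrArg (Polynomial.map (Int.castRingHom ℚ))
    (factorial_mul_shiftedLegendre_eq n)
  rw [← mul_pow, ← iterate_derivative_map] at h_rodrigues
  have h_taylor := congrArg (taylor (1 / 2 : ℚ)) h_rodrigues
  rwa [taylor_iterate_derivative, Polynomial.map_mul, Polynomial.map_natCast, Polynomial.map_pow,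
    Polynomial.map_mul, Polynomial.map_sub, map_X, Polynomial.map_one, taylor_mul, taylor_pow,
    h_square, ← C_eq_natCast, taylor_C, C_eq_natCast] at h_taylor

theorem coeff_centeredLegendre (n j : ℕ) : (centeredLegendre n).coeff j =
    (j + n).choose n * ((C (1 / 4) - X ^ 2) ^ n : ℚ[X]).coeff (j + n) := by
  have h := congrArg (coeff · j) (factorial_mul_centeredLegendre n)
  simp only [← C_eq_natCast, coeff_C_mul, coeff_iterate_derivative, nsmul_eq_mul,
    Nat.descFactorial_eq_factorial_mul_choose, Nat.cast_mul, mul_assoc] at h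
  exact mul_left_cancel₀ (mod_cast n.factorial_ne_zero) h

theorem coeff_centeredLegendre_of_odd {n j : ℕ} (h : Odd (j + n)) :
    (centeredLegendre n).coeff j = 0 := by
  rw [coeff_centeredLegendre, coeff_C_sub_X_sq_pow_of_odd _ _ h, mul_zero]

theorem coeff_centeredLegendre_two_mul_add (m j : ℕ) :
    (centeredLegendre (2 * m + j)).coeff j = (-1) ^ (m + j) * (2 * m + 2 * j).factorial /
      (4 ^ m * j.factorial * m.factorial * (m + j).factorial) := by
  have h_outer : ((j + (2 * m + j)).choose (2 * m + j) : ℚ) * j.factorial *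
      (2 * m + j).factorial = (2 * m + 2 * j).factorial := by
    rw [show 2 * m + 2 * j = j + (2 * m + j) by ring]
    exact_mod_cast Nat.add_choose_mul_factorial_mul_factorial j (2 * m + j)
  have h_inner : ((m + j + m).choose (m + j) : ℚ) * m.factorial * (m + j).factorial =
      (2 * m + j).factorial := by
    rw [show 2 * m + j = m + (m + j) by ring, add_comm (m + j) m]
    exact_mod_cast Nat.add_choose_mul_factorial_mul_factorial m (m + j)
  have h_coeff : ((C (1 / 4) - X ^ 2) ^ (2 * m + j) : ℚ[X]).coeff (j + (2 * m + j)) =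
      (-1) ^ (m + j) * (1 / 4) ^ m * (m + j + m).choose (m + j) := by
    rw [← coeff_C_sub_X_sq_pow_two_mul]
    congr 2 <;> ring
  rw [coeff_centeredLegendre, h_coeff, ← h_outer, ← h_inner, one_div_pow]
  field_simp

theorem sum_sq_mul_coeff_shiftedLegendre_eq_coeff_centeredLegendre (n : ℕ) :
    ∑ k ∈ range (n + 1), (k : ℚ) ^ 2 * (shiftedLegendre n).coeff k * (1 / 2) ^ k =
      ((centeredLegendre n).coeff 1 + (centeredLegendre n).coeff 2) / 2 := by
  have h_deg : ((shiftedLegendre n).map (Int.castRingHom ℚ)).natDegree < n + 1 := by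
    have := natDegree_map_le (f := Int.castRingHom ℚ) (p := shiftedLegendre n)
    rw [natDegree_shiftedLegendre] at this
    omega
  have h_sum := sum_sq_mul_coeff_mul_pow _ (1 / 2 : ℚ) h_deg
  simp only [coeff_map, eq_intCast] at h_sum
  rw [h_sum, centeredLegendre]
  ring

theorem sum_sq_mul_coeff_shiftedLegendre_even (m : ℕ) :
    ∑ k ∈ range (2 * m + 2 + 1), (k : ℚ) ^ 2 * (shiftedLegendre (2 * m + 2)).coeff k * (1 / 2) ^ k =
      (-1 : ℚ) ^ (m + 2) * ((2 : ℚ) ^ (2 * m + 2))⁻¹ * (2 * m + 4).factorial /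
        (m.factorial * (m + 2).factorial) := by
  rw [sum_sq_mul_coeff_shiftedLegendre_eq_coeff_centeredLegendre,
    coeff_centeredLegendre_of_odd ⟨m + 1, by ring⟩, coeff_centeredLegendre_two_mul_add,
    pow_add 2 (2 * m), pow_mul, show (2 : ℚ) ^ 2 = 4 by norm_num, Nat.factorial_two]
  push_cast
  field_simp
  ring

theorem sum_sq_mul_coeff_shiftedLegendre_odd (m : ℕ) :
    ∑ k ∈ range (2 * m + 1 + 1), (k : ℚ) ^ 2 * (shiftedLegendre (2 * m + 1)).coeff k * (1 / 2) ^ k =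
      (-1 : ℚ) ^ (m + 1) * ((2 : ℚ) ^ (2 * m + 1))⁻¹ * (2 * m + 2).factorial /
        (m.factorial * (m + 1).factorial) := by
  rw [sum_sq_mul_coeff_shiftedLegendre_eq_coeff_centeredLegendre,
    coeff_centeredLegendre_of_odd (j := 2) ⟨m + 1, by ring⟩, coeff_centeredLegendre_two_mul_add,
    pow_succ 2 (2 * m), pow_mul, show (2 : ℚ) ^ 2 = 4 by norm_num, Nat.factorial_one]
  push_cast
  field_simp
  ring

end

theorem stmt8 (p : ℕ) (hp : p.Prime) (hodd : p ≠ 2) :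
    (p % 4 = 1 →
      ratCongr p 2
        (∑ k ∈ Finset.range ((p - 1) / 2 + 1),
          (k : ℚ) ^ 2 * ((2 * k).choose k : ℚ) ^ 2 / 32 ^ k)
        ((-1 : ℚ) ^ ((p + 3) / 4) * ((2 : ℚ) ^ ((p - 1) / 2))⁻¹ *
          (((p + 3) / 2).factorial : ℚ) /
            ((((p - 5) / 4).factorial : ℚ) * (((p + 3) / 4).factorial : ℚ)))) ∧
    (p % 4 = 3 →
      ratCongr p 2
        (∑ k ∈ Finset.range ((p - 1) / 2 + 1),
          (k : ℚ) ^ 2 * ((2 * k).choose k : ℚ) ^ 2 / 32 ^ k)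
        ((-1 : ℚ) ^ ((p + 1) / 4) * ((2 : ℚ) ^ ((p - 1) / 2))⁻¹ *
          (((p + 1) / 2).factorial : ℚ) /
            ((((p - 3) / 4).factorial : ℚ) * (((p + 1) / 4).factorial : ℚ)))) := by
  constructor
  · intro h
    obtain ⟨m, rfl⟩ : ∃ m, p = 2 * (2 * m + 2) + 1 :=
      ⟨(p - 5) / 4, by have := hp.two_le; omega⟩
    have h_congr := ratCongr_sum_centralBinom_sq (2 * m + 2) hp
    rw [sum_sq_mul_coeff_shiftedLegendre_even] at h_congr
    convert h_congr using 6 <;> omega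
  · intro h
    obtain ⟨m, rfl⟩ : ∃ m, p = 2 * (2 * m + 1) + 1 := ⟨(p - 3) / 4, by omega⟩
    have h_congr := ratCongr_sum_centralBinom_sq (2 * m + 1) hp
    rw [sum_sq_mul_coeff_shiftedLegendre_odd] at h_congr
    convert h_congr using 6 <;> omega
end

section
/- Let p > 5 be a prime. If p \equiv 5 (mod 6), then \sum_{k=0}^{\lfloor p/3 \rfloor} (3k)!/(54^k k!^3) \equiv 0 \pmod{p}. If p \equiv 1 (mod 6) and p = A^2 + 3B^2 with integers A, B and A \equiv 1 (mod 3), then \sum_{k=0}^{\lfloor p/3 \rfloor} (3k)!/(54^k k!^3) \equiv 2A \pmod{p}. -/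
open Finset

/-! Modulo `p` the truncated sum is the shifted Legendre polynomial of degree `⌊p/3⌋` at `1/2`,
because `⌊p/3⌋` is congruent to `-1/3` or `-2/3`. In odd degree this value vanishes by the symmetry
`x ↦ 1 - x`. If `p = 6f + 1`, it is congruent to `C(3f, f)`, hence to `-S(1)`, where
`S(a) = ∑ χ(x³ + a)` and `χ` is the quadratic character. For a generator `g` of the units, the
relations `S(1) + χ(g) S(g) + S(g²) = 0` and `S(1)² + S(g)² + S(g²)² = 6p` show that `S(1) = -2a`
with `p = a² + 3b²`, and such a representation is unique up to signs. -/

section RatCast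

variable {K : Type*}

theorem den_natCast_div_natCast_ne_zero [DivisionRing K] (m : ℕ) {n : ℕ} (hn : (n : K) ≠ 0) :
    (((m : ℚ) / n).den : K) ≠ 0 := by
  obtain ⟨c, hc⟩ : ((m : ℚ) / n).den ∣ n := by
    have h := Rat.den_dvd m n
    rwa [Rat.divInt_eq_div, Int.cast_natCast, Int.cast_natCast, Int.natCast_dvd_natCast] at h
  intro h
  rw [hc, Nat.cast_mul, h, zero_mul] at hn
  exact hn rfl

theorem ratCast_natCast_div_natCast [DivisionRing K] (m : ℕ) {n : ℕ} (hn : (n : K) ≠ 0) :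
    (((m : ℚ) / n : ℚ) : K) = m / n := by
  rw [Rat.cast_div_of_ne_zero (by simp) (by simpa using hn), Rat.cast_natCast, Rat.cast_natCast]

theorem ratCast_sum_of_den_ne_zero [Field K] {ι : Type*} (s : Finset ι) (f : ι → ℚ)
    (hf : ∀ i ∈ s, ((f i).den : K) ≠ 0) :
    ((∑ i ∈ s, f i).den : K) ≠ 0 ∧ ((∑ i ∈ s, f i : ℚ) : K) = ∑ i ∈ s, (f i : K) := by
  classical
  induction s using Finset.induction_on with
  | empty => simp
  | insert a s ha ih =>
    obtain ⟨hs, hsum⟩ := ih fun i hi => hf i (mem_insert_of_mem hi)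
    have hfa := hf a (mem_insert_self a s)
    rw [sum_insert ha, sum_insert ha, Rat.cast_add_of_ne_zero hfa hs, hsum]
    obtain ⟨c, hc⟩ := Rat.add_den_dvd (f a) (∑ i ∈ s, f i)
    refine ⟨fun h => mul_ne_zero hfa hs ?_, rfl⟩
    rw [← Nat.cast_mul, hc, Nat.cast_mul, h, zero_mul]

theorem ratCast_sum_factorial_div [Field K] {n : ℕ} (h54 : (54 : K) ≠ 0)
    (hfac : (n.factorial : K) ≠ 0) :
    ((∑ k ∈ range (n + 1),
        ((3 * k).factorial : ℚ) / (54 ^ k * (k.factorial : ℚ) ^ 3)).den : K) ≠ 0 ∧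
      ((∑ k ∈ range (n + 1),
        ((3 * k).factorial : ℚ) / (54 ^ k * (k.factorial : ℚ) ^ 3) : ℚ) : K) =
        ∑ k ∈ range (n + 1), ((3 * k).factorial : K) / (54 ^ k * (k.factorial : K) ^ 3) := by
  have hden : ∀ k ∈ range (n + 1), ((54 ^ k * k.factorial ^ 3 : ℕ) : K) ≠ 0 := fun k hk => by
    obtain ⟨c, hc⟩ := Nat.factorial_dvd_factorial (mem_range_succ_iff.1 hk)
    rw [hc, Nat.cast_mul] at hfac
    push_cast
    exact mul_ne_zero (pow_ne_zero _ h54) (pow_ne_zero _ (left_ne_zero_of_mul hfac))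
  have hterm : ∀ k, ((3 * k).factorial : ℚ) / (54 ^ k * (k.factorial : ℚ) ^ 3) =
      ((3 * k).factorial : ℚ) / (54 ^ k * k.factorial ^ 3 : ℕ) := fun k => by
    push_cast
    rfl
  simp_rw [hterm]
  obtain ⟨hsum_den, hsum⟩ := ratCast_sum_of_den_ne_zero _ _ fun k hk =>
    den_natCast_div_natCast_ne_zero (3 * k).factorial (hden k hk)
  refine ⟨hsum_den, hsum.trans (sum_congr rfl fun k hk => ?_)⟩
  rw [ratCast_natCast_div_natCast _ (hden k hk)]
  push_cast
  rfl

theorem ratCongr_one_of_cast_eq {p : ℕ} [Fact p.Prime] {a b : ℚ} (ha : (a.den : ZMod p) ≠ 0)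
    (hb : (b.den : ZMod p) ≠ 0) (h : (a : ZMod p) = b) : ratCongr p 1 a b := by
  have hden : ((a - b).den : ZMod p) ≠ 0 := by
    obtain ⟨c, hc⟩ := Rat.sub_den_dvd a b
    refine fun h0 => mul_ne_zero ha hb ?_
    rw [← Nat.cast_mul, hc, Nat.cast_mul, h0, zero_mul]
  have hnum : ((a - b).num : ZMod p) = 0 := by
    have h0 : ((a - b : ℚ) : ZMod p) = 0 := by
      rw [Rat.cast_sub_of_ne_zero ha hb, h, sub_self]
    rw [Rat.cast_def, div_eq_zero_iff] at h0
    exact h0.resolve_right hden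
  obtain ⟨m, hm⟩ := (ZMod.intCast_zmod_eq_zero_iff_dvd _ p).1 hnum
  refine ⟨m / (a - b).den, ?_, fun hdvd => hden ?_⟩
  · rw [pow_one, ← mul_div_assoc, ← Int.cast_natCast p, ← Int.cast_mul, ← hm, Rat.num_div_den]
  · rw [ZMod.natCast_eq_zero_iff]
    exact hdvd.trans (by exact_mod_cast Rat.den_dvd m (a - b).den)

end RatCast

section Factorial

variable {R : Type*} [CommRing R]

/- The two identities below are the reductions of `C(2k, k) = (-4)^k C(-1/2, k)` and of
`(3k)! / k!^3 = (-27)^k C(-1/3, k) C(-1/3 + k, k)` to a ring where a natural number `n`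
plays the part of `-1/2`, respectively of `-1/3` or `-2/3`. -/
theorem cast_factorial_two_mul_of_two_mul_add_one_eq_zero {n : ℕ} (hn : (2 * n + 1 : R) = 0)
    (k : ℕ) : ((2 * k).factorial : R) = (-4) ^ k * (k.factorial : R) ^ 2 * n.choose k := by
  have key : ((2 * k).factorial : R) = (-4) ^ k * k.factorial * n.descFactorial k := by
    rw [← descPochhammer_eval_eq_descFactorial]
    induction k with
    | zero => simp
    | succ k ih =>
      rw [show 2 * (k + 1) = 2 * k + 1 + 1 by ring, Nat.factorial_succ, Nat.factorial_succ,
        Nat.factorial_succ, descPochhammer_succ_eval]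
      push_cast
      rw [ih]
      linear_combination (2 * (k + 1) * (-4) ^ k * k.factorial *
        (descPochhammer R k).eval (n : R)) * hn
  rw [key, Nat.descFactorial_eq_factorial_mul_choose]
  push_cast
  ring

theorem cast_factorial_three_mul_of_mul_eq_zero {n : ℕ} (hn : (3 * n + 1 : R) * (3 * n + 2) = 0)
    (k : ℕ) : ((3 * k).factorial : R) =
      (-27) ^ k * (k.factorial : R) ^ 3 * (n.choose k * (n + k).choose n) := by
  have key : ((3 * k).factorial : R) =
      (-27) ^ k * k.factorial * (n.descFactorial k * (n + 1).ascFactorial k) := by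
    rw [← descPochhammer_eval_eq_descFactorial, ← ascPochhammer_nat_eq_natCast_ascFactorial]
    induction k with
    | zero => simp
    | succ k ih =>
      rw [show 3 * (k + 1) = 3 * k + 1 + 1 + 1 by ring, Nat.factorial_succ, Nat.factorial_succ,
        Nat.factorial_succ, Nat.factorial_succ, descPochhammer_succ_eval,
        ascPochhammer_succ_eval]
      push_cast at ih ⊢
      rw [ih]
      linear_combination (3 * (k + 1) * (-27) ^ k * k.factorial *
        (descPochhammer R k).eval (n : R) * (ascPochhammer R k).eval (n + 1 : R)) * hn
  rw [key, Nat.descFactorial_eq_factorial_mul_choose, Nat.ascFactorial_eq_factorial_mul_choose,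
    Nat.choose_symm_add]
  push_cast
  ring

end Factorial

section Legendre

open Polynomial

theorem shiftedLegendre_eq_hasseDeriv (n : ℕ) :
    shiftedLegendre n = hasseDeriv n ((X : ℤ[X]) ^ n * (1 - X) ^ n) := by
  refine nat_mul_inj' ?_ n.factorial_ne_zero
  rw [factorial_mul_shiftedLegendre_eq, ← factorial_smul_hasseDeriv, LinearMap.smul_apply,
    nsmul_eq_mul]

theorem map_hasseDeriv {R S : Type*} [Semiring R] [Semiring S] (φ : R →+* S) (n : ℕ) (f : R[X]) :
    (hasseDeriv n f).map φ = hasseDeriv n (f.map φ) := by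
  ext
  simp only [coeff_map, hasseDeriv_coeff, map_mul, map_natCast]

variable {R : Type*} [CommRing R]

theorem aeval_shiftedLegendre_eq_coeff (n : ℕ) (r : R) :
    aeval r (shiftedLegendre n) = (((X + C r) * (1 - (X + C r))) ^ n).coeff n := by
  have h : taylor r ((X : R[X]) ^ n * (1 - X) ^ n) = ((X + C r) * (1 - (X + C r))) ^ n := by
    simp [taylor_apply, mul_pow]
  rw [← h, taylor_coeff, aeval_def, eval₂_eq_eval_map, shiftedLegendre_eq_hasseDeriv,
    map_hasseDeriv]
  simp

theorem aeval_half_shiftedLegendre_eq_coeff_expand (n : ℕ) {r : R} (hr : 2 * r = 1) :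
    aeval r (shiftedLegendre n) = (expand R 2 ((C (r ^ 2) - X) ^ n)).coeff n := by
  have hC : (2 : R[X]) * C r = 1 := by rw [← C_ofNat, ← C_mul, hr, C_1]
  rw [aeval_shiftedLegendre_eq_coeff, map_pow, map_sub, expand_C, expand_X, C_pow]
  congr 2
  linear_combination -(X + C r) * hC

theorem aeval_half_shiftedLegendre_of_odd {n : ℕ} (hn : Odd n) {r : R} (hr : 2 * r = 1) :
    aeval r (shiftedLegendre n) = 0 := by
  rw [aeval_half_shiftedLegendre_eq_coeff_expand n hr, coeff_expand two_pos,
    if_neg hn.not_two_dvd_nat]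

theorem aeval_half_shiftedLegendre_two_mul (m : ℕ) {r : R} (hr : 2 * r = 1) :
    aeval r (shiftedLegendre (2 * m)) = (-r ^ 2) ^ m * m.centralBinom := by
  rw [aeval_half_shiftedLegendre_eq_coeff_expand _ hr, coeff_expand_mul' two_pos,
    ← neg_sub, even_two_mul m |>.neg_pow, sub_eq_add_neg, ← C_neg, coeff_X_add_C_pow,
    Nat.centralBinom_eq_two_mul_choose]
  congr 2
  omega

theorem sum_factorial_div_eq_aeval_shiftedLegendre {K : Type*} [Field K] {n : ℕ}
    (hn : (3 * n + 1 : K) * (3 * n + 2) = 0) (hfac : (n.factorial : K) ≠ 0) :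
    ∑ k ∈ range (n + 1), ((3 * k).factorial : K) / (54 ^ k * (k.factorial : K) ^ 3) =
      aeval (2⁻¹ : K) (shiftedLegendre n) := by
  have h27 : (27 : K) ≠ 0 := by
    intro h0
    have h3 : (3 : K) = 0 := pow_eq_zero_iff (n := 3) three_ne_zero |>.1 (by rw [← h0]; norm_num)
    have h1 : (1 : K) = 0 := by linear_combination (1 + 3 * n * (n + 1)) * h3 - hn
    exact one_ne_zero h1
  rw [shiftedLegendre, map_sum]
  refine sum_congr rfl fun k hk => ?_
  have hk : (k.factorial : K) ≠ 0 := fun h0 => hfac <| by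
    obtain ⟨c, hc⟩ := Nat.factorial_dvd_factorial (mem_range_succ_iff.1 hk)
    rw [hc, Nat.cast_mul, h0, zero_mul]
  rw [cast_factorial_three_mul_of_mul_eq_zero hn]
  have h54 : (54 : K) ^ k = 2 ^ k * 27 ^ k := by rw [← mul_pow]; norm_num
  simp only [map_mul, map_pow, aeval_X, map_natCast, map_neg, map_one]
  rw [h54, neg_pow, inv_pow]
  field_simp

end Legendre

section PowerFibres

theorem sum_range_mul_of_periodic {M : Type*} [AddCommMonoid M] {f : ℕ → M} {n : ℕ}
    (hf : Function.Periodic f n) (m : ℕ) :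
    ∑ i ∈ range (n * m), f i = m • ∑ i ∈ range n, f i := by
  induction m with
  | zero => simp
  | succ m ih =>
    have hper : ∀ i, f (n * m + i) = f i := fun i => by
      rw [add_comm, mul_comm]
      exact hf.nat_mul m i
    rw [mul_add_one, sum_range_add, ih, succ_nsmul]
    simp only [hper]

theorem sum_eq_nsmul_sum_range_generator_pow {G M : Type*} [CommGroup G] [Fintype G]
    [AddCommMonoid M] {g : G} (hg : ∀ x, x ∈ Subgroup.zpowers g) {n m : ℕ}
    (hnm : Fintype.card G = n * m) {f : G → M} (hf : ∀ x t, f (x * t ^ n) = f x) :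
    ∑ x, f x = m • ∑ i ∈ range n, f (g ^ i) := by
  classical
  have hord : orderOf g = n * m := by
    rw [← hnm, ← Nat.card_eq_fintype_card, orderOf_eq_card_of_forall_mem_zpowers hg]
  rw [← IsCyclic.image_range_orderOf hg, hord, sum_image,
    sum_range_mul_of_periodic (fun i => by rw [pow_add, hf])]
  simpa only [hord, coe_range] using pow_injOn_Iio_orderOf (x := g)

variable {F : Type*} [Field F] [Fintype F]

theorem sum_eq_zero_add_sum_units [DecidableEq F] {M : Type*} [AddCommMonoid M] (f : F → M) :
    ∑ x, f x = f 0 + ∑ u : Fˣ, f u := by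
  rw [Fintype.sum_eq_add_sum_subtype_ne f 0]
  exact congrArg (f 0 + ·) (unitsEquivNeZero.sum_comp fun x : {x : F // x ≠ 0} => f x).symm

theorem sum_pow_eq_ite {i : ℕ} (hi : i ≠ 0) :
    ∑ x : F, x ^ i = if Fintype.card F - 1 ∣ i then -1 else 0 := by
  classical
  rw [sum_eq_zero_add_sum_units, zero_pow hi, zero_add, ← FiniteField.sum_pow_units]

theorem sum_comp_pow_modEq {n : ℕ} (hn : n ∣ Fintype.card F - 1) (f : F → ℤ) :
    ∑ x, f (x ^ n) ≡ f 0 [ZMOD n] := by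
  classical
  obtain ⟨g, hg⟩ := IsCyclic.exists_generator (α := Fˣ)
  obtain ⟨m, hm⟩ := hn
  have hcard : Fintype.card Fˣ = m * n := by rw [Fintype.card_units, hm, mul_comm]
  have hn : n ≠ 0 := by
    rintro rfl
    exact Fintype.card_ne_zero (hcard.trans (mul_zero m))
  have hinv : ∀ x t : Fˣ, f ((x * t ^ m : Fˣ) ^ n) = f ((x : F) ^ n) := fun x t => by
    rw [← Units.val_pow_eq_pow_val, ← Units.val_pow_eq_pow_val, mul_pow, ← pow_mul, ← hcard,
      pow_card_eq_one, mul_one]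
  rw [sum_eq_zero_add_sum_units, zero_pow hn, sum_eq_nsmul_sum_range_generator_pow hg hcard hinv,
    nsmul_eq_mul]
  exact Int.add_mul_emod_self_left ..

variable [DecidableEq F]

theorem card_filter_pow_eq_pow {n : ℕ} (hn : n ∣ Fintype.card F - 1) {y : F}
    (hy : y ≠ 0) : #{x | x ^ n = y ^ n} = n := by
  have hpos : 0 < n := Nat.pos_of_dvd_of_pos hn (Nat.sub_pos_of_lt Fintype.one_lt_card)
  obtain ⟨g, hg⟩ := IsCyclic.exists_generator (α := Fˣ)
  obtain ⟨m, hm⟩ := hn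
  have hζ : IsPrimitiveRoot ((g ^ m : Fˣ) : F) n := by
    rw [IsPrimitiveRoot.coe_units_iff]
    refine (IsPrimitiveRoot.orderOf g).pow (orderOf_pos g) ?_
    rw [orderOf_eq_card_of_forall_mem_zpowers hg, Nat.card_eq_fintype_card, Fintype.card_units, hm,
      mul_comm]
  have hroots : ({x | x ^ n = y ^ n} : Finset F) = Polynomial.nthRootsFinset n (y ^ n) := by
    ext x
    simp [Polynomial.mem_nthRootsFinset hpos]
  rw [hroots, Polynomial.nthRootsFinset_def, Multiset.toFinset_card_of_nodup
    (hζ.nthRoots_nodup (pow_ne_zero n hy)), hζ.card_nthRoots, if_pos ⟨y, rfl⟩]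

theorem sum_card_filter_pow_eq_pow {n : ℕ} (hn : n ∣ Fintype.card F - 1) :
    ∑ y : F, #{x | x ^ n = y ^ n} = 1 + (Fintype.card F - 1) * n := by
  have hn0 : n ≠ 0 := by
    rintro rfl
    exact (Nat.sub_pos_of_lt (Fintype.one_lt_card (α := F))).ne' (zero_dvd_iff.1 hn)
  have hzero : ({x | x ^ n = 0 ^ n} : Finset F) = {0} := by
    ext x
    simp [hn0]
  rw [sum_eq_zero_add_sum_units, hzero, card_singleton,
    sum_congr rfl fun u _ => card_filter_pow_eq_pow hn u.ne_zero, sum_const, card_univ,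
    Fintype.card_units, smul_eq_mul]

end PowerFibres

section Jacobsthal

variable {F : Type*} [Field F] [Fintype F] [DecidableEq F]

theorem sum_mulChar_add_mul_inv_add {R : Type*} [CommRing R] [IsDomain R] {χ : MulChar F R}
    (hχ : χ ≠ 1) (u v : F) :
    ∑ a, χ (u + a) * χ⁻¹ (v + a) = (if u = v then (Fintype.card F : R) else 0) - 1 := by
  obtain rfl | huv := eq_or_ne u v
  · have hshift : ∑ a, (1 : MulChar F R) (u + a) = Fintype.card Fˣ :=
      (Equiv.sum_comp (Equiv.addLeft u) (1 : MulChar F R)).trans MulChar.sum_one_eq_card_units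
    simp only [← MulChar.mul_apply, mul_inv_cancel, if_true]
    rw [hshift, Fintype.card_units, Nat.cast_pred Fintype.card_pos]
  · have huv' : u - v ≠ 0 := sub_ne_zero.2 huv
    let e : F ≃ F := (Equiv.mulLeft₀ (u - v) huv').trans (Equiv.subRight u)
    have hterm : ∀ x, χ (u + e x) * χ⁻¹ (v + e x) = χ (-1) * (χ x * χ⁻¹ (1 - x)) := fun x => by
      have hu : u + e x = (u - v) * x := by simp [e]
      have hv : v + e x = -1 * ((u - v) * (1 - x)) := by linear_combination hu
      rw [hu, hv, map_mul, map_mul, map_mul, MulChar.inv_apply' χ (-1), inv_neg, inv_one]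
      have hcancel : χ (u - v) * χ⁻¹ (u - v) = 1 := by
        rw [← MulChar.mul_apply, mul_inv_cancel, MulChar.one_apply huv'.isUnit]
      linear_combination χ (-1) * χ x * χ⁻¹ (1 - x) * hcancel
    have hsq : χ (-1) * χ (-1) = 1 := by rw [← map_mul, neg_one_mul, neg_neg, map_one]
    rw [if_neg huv, ← e.sum_comp, sum_congr rfl fun x _ => hterm x, ← mul_sum, ← jacobiSum,
      jacobiSum_nontrivial_inv hχ, mul_neg, hsq, zero_sub]

theorem sum_quadraticChar_add_mul_add (hF : ringChar F ≠ 2) (u v : F) :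
    ∑ a, quadraticChar F (u + a) * quadraticChar F (v + a) =
      (if u = v then (Fintype.card F : ℤ) else 0) - 1 := by
  simpa only [(quadraticChar_isQuadratic F).inv] using
    sum_mulChar_add_mul_inv_add (quadraticChar_ne_one hF) u v

/-- The Jacobsthal sum `∑ χ (x ^ n + a)` over `x` in a finite field, where `χ` is the quadratic
character; it is written `ψₙ(a)` by Berndt, Evans and Williams. -/
def jacobsthalSum (n : ℕ) (a : F) : ℤ := ∑ x, quadraticChar F (x ^ n + a)

theorem jacobsthalSum_mul_pow (n : ℕ) (a : F) {t : F} (ht : t ≠ 0) :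
    jacobsthalSum n (a * t ^ n) = quadraticChar F t ^ n * jacobsthalSum n a := by
  rw [jacobsthalSum, jacobsthalSum, mul_sum,
    ← Equiv.sum_comp (Equiv.mulRight₀ t ht) fun x => quadraticChar F (x ^ n + a * t ^ n)]
  refine sum_congr rfl fun x _ => ?_
  rw [Equiv.mulRight₀_apply, mul_pow, ← add_mul, map_mul, map_pow, mul_comm]

theorem jacobsthalSum_zero (hF : ringChar F ≠ 2) {n : ℕ} (hn : Odd n) :
    jacobsthalSum n (0 : F) = 0 := by
  simp_rw [jacobsthalSum, add_zero, map_pow, ← MulChar.pow_apply' _ hn.pos.ne',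
    (quadraticChar_isQuadratic F).pow_odd hn]
  exact quadraticChar_sum_zero hF

theorem jacobsthalSum_modEq {n : ℕ} (hn : n ∣ Fintype.card F - 1) (a : F) :
    jacobsthalSum n a ≡ quadraticChar F a [ZMOD n] := by
  simpa only [zero_add] using! sum_comp_pow_modEq hn fun y => quadraticChar F (y + a)

theorem jacobsthalSum_neg_pow_modEq_two {n : ℕ} (hn : n ∣ Fintype.card F - 1) {y : F}
    (hy : y ≠ 0) : jacobsthalSum n (-y ^ n) ≡ Fintype.card F - n [ZMOD 2] := by
  have hmod : ∀ z : F, quadraticChar F z ≡ 1 - if z = 0 then 1 else 0 [ZMOD 2] := fun z => by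
    obtain rfl | hz := eq_or_ne z 0
    · simp [Int.ModEq]
    · obtain h | h := quadraticChar_dichotomy hz <;> simp [h, hz, Int.ModEq]
  refine (Int.ModEq.sum fun x _ => hmod (x ^ n + -y ^ n)).trans ?_
  simp_rw [sum_sub_distrib, add_neg_eq_zero, sum_boole, card_filter_pow_eq_pow hn hy]
  simp

theorem sum_quadraticChar_mul_jacobsthalSum (hF : ringChar F ≠ 2) {n : ℕ} (hn : n ≠ 0) :
    ∑ a : F, quadraticChar F a * jacobsthalSum n a = 0 := by
  have hinner : ∀ x : F, ∑ a, quadraticChar F a * quadraticChar F (x ^ n + a) =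
      (if x = 0 then (Fintype.card F : ℤ) else 0) - 1 := fun x => by
    simpa [hn, eq_comm (a := (0 : F))] using! sum_quadraticChar_add_mul_add hF 0 (x ^ n)
  simp_rw [jacobsthalSum, mul_sum]
  rw [sum_comm]
  simp_rw [hinner]
  simp

theorem sum_jacobsthalSum_sq (hF : ringChar F ≠ 2) {n : ℕ} (hn : n ∣ Fintype.card F - 1) :
    ∑ a : F, jacobsthalSum n a ^ 2 =
      (n - 1) * Fintype.card F * (Fintype.card F - 1 : ℤ) := by
  have hfibres : ∑ y : F, (#{x | x ^ n = y ^ n} : ℤ) = 1 + (Fintype.card F - 1) * n := by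
    rw [← Nat.cast_sum, sum_card_filter_pow_eq_pow hn, Nat.cast_add, Nat.cast_mul,
      Nat.cast_pred Fintype.card_pos, Nat.cast_one]
  calc ∑ a : F, jacobsthalSum n a ^ 2
      = ∑ y : F, ∑ x : F, ∑ a, quadraticChar F (x ^ n + a) * quadraticChar F (y ^ n + a) := by
        simp_rw [jacobsthalSum, sq, sum_mul_sum]
        rw [sum_comm_cycle]
        exact sum_congr rfl fun _ _ => sum_comm
    _ = ∑ y : F, (Fintype.card F * #{x | x ^ n = y ^ n} - Fintype.card F : ℤ) := by
        simp_rw [sum_quadraticChar_add_mul_add hF, sum_sub_distrib, sum_ite]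
        simp [mul_comm]
    _ = _ := by
        rw [sum_sub_distrib, ← mul_sum, hfibres, sum_const, card_univ, nsmul_eq_mul]
        ring

theorem sum_range_quadraticChar_mul_jacobsthalSum (hF : ringChar F ≠ 2) {n : ℕ}
    (hn : n ∣ Fintype.card F - 1) {g : Fˣ} (hg : ∀ x, x ∈ Subgroup.zpowers g) :
    ∑ i ∈ range n, quadraticChar F (g ^ i) * jacobsthalSum n (g ^ i : F) = 0 := by
  obtain ⟨m, hm⟩ := hn
  rw [← Fintype.card_units] at hm
  obtain ⟨hn0, hm0⟩ := mul_ne_zero_iff.1 (hm ▸ Fintype.card_ne_zero)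
  have hinv : ∀ x t : Fˣ,
      quadraticChar F (x * t ^ n : Fˣ) * jacobsthalSum n ((x * t ^ n : Fˣ) : F) =
        quadraticChar F x * jacobsthalSum n (x : F) := fun x t => by
    have ht : quadraticChar F (t ^ n) ^ 2 = 1 := quadraticChar_sq_one (pow_ne_zero n t.ne_zero)
    rw [map_pow] at ht
    rw [Units.val_mul, Units.val_pow_eq_pow_val, jacobsthalSum_mul_pow n _ t.ne_zero, map_mul,
      map_pow]
    linear_combination quadraticChar F x * jacobsthalSum n (x : F) * ht
  have hsum := sum_quadraticChar_mul_jacobsthalSum hF hn0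
  rw [sum_eq_zero_add_sum_units, quadraticChar_zero, zero_mul, zero_add,
    sum_eq_nsmul_sum_range_generator_pow hg hm hinv] at hsum
  simpa only [Units.val_pow_eq_pow_val] using (smul_eq_zero.1 hsum).resolve_left hm0

theorem sum_range_jacobsthalSum_sq (hF : ringChar F ≠ 2) {n : ℕ} (hn : n ∣ Fintype.card F - 1)
    (hodd : Odd n) {g : Fˣ} (hg : ∀ x, x ∈ Subgroup.zpowers g) :
    ∑ i ∈ range n, jacobsthalSum n (g ^ i : F) ^ 2 = (n - 1) * n * (Fintype.card F : ℤ) := by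
  obtain ⟨m, hm⟩ := id hn
  have hq : (Fintype.card F - 1 : ℤ) = n * m := by
    rw [← Nat.cast_mul, ← hm, Nat.cast_pred Fintype.card_pos]
  rw [← Fintype.card_units] at hm
  have hm0 : m ≠ 0 := right_ne_zero_of_mul (hm ▸ Fintype.card_ne_zero)
  have hinv : ∀ x t : Fˣ,
      jacobsthalSum n ((x * t ^ n : Fˣ) : F) ^ 2 = jacobsthalSum n (x : F) ^ 2 := fun x t => by
    rw [Units.val_mul, Units.val_pow_eq_pow_val, jacobsthalSum_mul_pow n _ t.ne_zero, mul_pow,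
      ← map_pow, quadraticChar_sq_one (pow_ne_zero n t.ne_zero), one_mul]
  have hsum := sum_jacobsthalSum_sq hF hn
  rw [sum_eq_zero_add_sum_units, jacobsthalSum_zero hF hodd, zero_pow two_ne_zero, zero_add,
    sum_eq_nsmul_sum_range_generator_pow hg hm hinv, nsmul_eq_mul, hq] at hsum
  simp only [Units.val_pow_eq_pow_val] at hsum
  refine mul_left_cancel₀ (Nat.cast_ne_zero.2 hm0 : (m : ℤ) ≠ 0) ?_
  linear_combination hsum

theorem exists_jacobsthalSum_three_one_eq (hF : Fintype.card F % 6 = 1) :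
    ∃ a b : ℤ, jacobsthalSum 3 (1 : F) = -2 * a ∧ a % 3 = 1 ∧
      (Fintype.card F : ℤ) = a ^ 2 + 3 * b ^ 2 := by
  have hchar : ringChar F ≠ 2 := fun h => by
    have := FiniteField.even_card_iff_char_two.1 h
    omega
  have hdvd : 3 ∣ Fintype.card F - 1 := by omega
  have hthree : jacobsthalSum 3 (1 : F) ≡ 1 [ZMOD 3] := by
    simpa only [map_one] using! jacobsthalSum_modEq hdvd (1 : F)
  have htwo : jacobsthalSum 3 (1 : F) ≡ Fintype.card F - 3 [ZMOD 2] := by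
    simpa [Odd.neg_one_pow (by decide : Odd 3)] using
      jacobsthalSum_neg_pow_modEq_two hdvd (neg_ne_zero.2 (one_ne_zero (α := F)))
  obtain ⟨a, ha⟩ : ∃ a, jacobsthalSum 3 (1 : F) = -2 * a := by
    refine ⟨-(jacobsthalSum 3 (1 : F) / 2), ?_⟩
    unfold Int.ModEq at htwo
    omega
  obtain ⟨g, hg⟩ := IsCyclic.exists_generator (α := Fˣ)
  have hlin := sum_range_quadraticChar_mul_jacobsthalSum hchar hdvd hg
  have hsq := sum_range_jacobsthalSum_sq hchar hdvd (by decide) hg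
  have he := quadraticChar_sq_one (F := F) g.ne_zero
  simp only [sum_range_succ, sum_range_zero, zero_add, pow_zero, pow_one, map_pow, one_mul,
    he, ha, Nat.cast_ofNat] at hlin hsq
  have hdiff : (quadraticChar F g * jacobsthalSum 3 (g : F) - a) ^ 2 =
      3 * (Fintype.card F - a ^ 2) := by
    refine mul_left_cancel₀ two_ne_zero ?_
    linear_combination hsq + jacobsthalSum 3 (g : F) ^ 2 * he - (jacobsthalSum 3 ((g : F) ^ 2) +
      2 * a - quadraticChar F g * jacobsthalSum 3 (g : F)) * hlin
  obtain ⟨b, hb⟩ : 3 ∣ quadraticChar F g * jacobsthalSum 3 (g : F) - a :=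
    Int.prime_three.dvd_of_dvd_pow (Dvd.intro _ hdiff.symm)
  refine ⟨a, b, ha, ?_, ?_⟩
  · rw [ha] at hthree
    unfold Int.ModEq at hthree
    omega
  · rw [hb] at hdiff
    linarith

theorem cast_jacobsthalSum_three {f : ℕ} (hF : Fintype.card F = 6 * f + 1) (a : F) :
    (jacobsthalSum 3 a : F) = -((3 * f).choose f * a ^ f) := by
  have hchar : ringChar F ≠ 2 := fun h => by
    have := FiniteField.even_card_iff_char_two.1 h
    omega
  have hf : 0 < f := by
    have := Fintype.one_lt_card (α := F)
    omega
  have hterm : ∀ x : F, (quadraticChar F (x ^ 3 + a) : F) =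
      ∑ j ∈ range (3 * f + 1), x ^ (3 * j) * (a ^ (3 * f - j) * (3 * f).choose j) := fun x => by
    rw [quadraticChar_eq_pow_of_char_ne_two' hchar, hF, show (6 * f + 1) / 2 = 3 * f by omega,
      add_pow]
    simp_rw [← pow_mul, mul_assoc]
  have hsum : ∀ j ∈ range (3 * f + 1), ∑ x : F, x ^ (3 * j) = if j = 2 * f then -1 else 0 :=
      fun j hj => by
    obtain rfl | hj0 := eq_or_ne j 0
    · rw [mul_zero, if_neg (by omega), FiniteField.sum_pow_lt_card_sub_one F 0 (by omega)]
    · rw [sum_pow_eq_ite (by omega), hF, Nat.add_sub_cancel]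
      refine if_congr ⟨fun ⟨c, hc⟩ => ?_, fun h => ⟨1, by omega⟩⟩ rfl rfl
      have hjf := mem_range_succ_iff.1 hj
      have hc2 : c < 2 := by nlinarith
      interval_cases c <;> omega
  simp_rw [jacobsthalSum, Int.cast_sum, hterm]
  rw [sum_comm]
  simp_rw [← sum_mul]
  rw [sum_congr rfl fun j hj => by rw [hsum j hj, ite_mul, zero_mul],
    sum_ite_eq', if_pos (mem_range_succ_iff.2 (by omega)), show 3 * f - 2 * f = f by omega,
    Nat.choose_symm_of_eq_add (show 3 * f = 2 * f + f by ring)]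
  ring

end Jacobsthal

section Uniqueness

theorem sq_eq_sq_of_dvd_mul_sub_mul {n d a b A B : ℤ} (hn : n ≠ 0) (hd : 1 < d)
    (h : n = a ^ 2 + d * b ^ 2) (H : n = A ^ 2 + d * B ^ 2) (hdvd : n ∣ a * B - A * b) :
    a ^ 2 = A ^ 2 := by
  obtain ⟨k, hk⟩ := hdvd
  have hbrahmagupta : n ^ 2 = (a * A + d * b * B) ^ 2 + d * (n * k) ^ 2 := by
    rw [← hk]
    linear_combination n * H + (A ^ 2 + d * B ^ 2) * h
  have hk0 : k = 0 := by
    by_contra hne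
    have hk1 : 0 < k ^ 2 := by positivity
    have hn2 : 0 < n ^ 2 := by positivity
    nlinarith [sq_nonneg (a * A + d * b * B)]
  rw [hk0, mul_zero] at hk
  refine (mul_left_cancel₀ hn ?_).symm
  linear_combination A ^ 2 * h - a ^ 2 * H - d * (a * B + A * b) * hk

theorem sq_eq_sq_of_prime_eq_sq_add_mul_sq {p d a b A B : ℤ} (hp : Prime p) (hd : 1 < d)
    (h : p = a ^ 2 + d * b ^ 2) (H : p = A ^ 2 + d * B ^ 2) : a ^ 2 = A ^ 2 := by
  have hdvd : p ∣ (a * B - A * b) * (a * -B - A * b) :=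
    ⟨b ^ 2 - B ^ 2, by linear_combination B ^ 2 * h - b ^ 2 * H⟩
  obtain hdvd | hdvd := hp.dvd_or_dvd hdvd
  · exact sq_eq_sq_of_dvd_mul_sub_mul hp.ne_zero hd h H hdvd
  · exact sq_eq_sq_of_dvd_mul_sub_mul hp.ne_zero hd h (by rw [H, neg_sq]) hdvd

end Uniqueness

section Prime

open Polynomial

variable {p : ℕ} [Fact p.Prime]

theorem ratCongr_sum_factorial_div {b : ℤ} (hp2 : p ≠ 2) (hp3 : ¬ 3 ∣ p)
    (hb : aeval (2⁻¹ : ZMod p) (shiftedLegendre (p / 3)) = (b : ZMod p)) :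
    ratCongr p 1 (∑ k ∈ range (p / 3 + 1),
      ((3 * k).factorial : ℚ) / (54 ^ k * (k.factorial : ℚ) ^ 3)) b := by
  have hprime : p.Prime := Fact.out
  have h54 : (54 : ZMod p) ≠ 0 := by
    rw [Ne, show (54 : ZMod p) = (2 * 3 ^ 3 : ℕ) by norm_num, ZMod.natCast_eq_zero_iff,
      hprime.dvd_mul]
    rintro (h | h)
    · exact hp2 ((Nat.prime_dvd_prime_iff_eq hprime Nat.prime_two).1 h)
    · exact hp3 ((Nat.prime_dvd_prime_iff_eq hprime Nat.prime_three).1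
        (hprime.dvd_of_dvd_pow h)).symm.dvd
  have hfac : ((p / 3).factorial : ZMod p) ≠ 0 := by
    rw [Ne, ZMod.natCast_eq_zero_iff, hprime.dvd_factorial]
    have := hprime.pos
    omega
  have hdvd : p ∣ (3 * (p / 3) + 1) * (3 * (p / 3) + 2) := by
    obtain h | h : 3 * (p / 3) + 1 = p ∨ 3 * (p / 3) + 2 = p := by omega
    · exact h.symm.dvd.mul_right _
    · exact h.symm.dvd.mul_left _
  have hn : (3 * (p / 3 : ℕ) + 1 : ZMod p) * (3 * (p / 3 : ℕ) + 2) = 0 := by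
    exact_mod_cast (ZMod.natCast_eq_zero_iff _ p).2 hdvd
  obtain ⟨hden, hcast⟩ := ratCast_sum_factorial_div h54 hfac
  refine ratCongr_one_of_cast_eq hden (by simp) ?_
  rw [hcast, sum_factorial_div_eq_aeval_shiftedLegendre hn hfac, hb, Rat.cast_intCast]

theorem aeval_half_shiftedLegendre_two_mul_eq_choose {f : ℕ} (hp : p = 6 * f + 1) :
    aeval (2⁻¹ : ZMod p) (shiftedLegendre (2 * f)) = (3 * f).choose f := by
  have hcast : (2 * (3 * f : ℕ) + 1 : ZMod p) = 0 := by
    have h : ((6 * f + 1 : ℕ) : ZMod p) = 0 := (ZMod.natCast_eq_zero_iff _ p).2 hp.dvd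
    push_cast at h ⊢
    linear_combination h
  have hhalf : (2 : ZMod p) * 2⁻¹ = 1 :=
    mul_inv_cancel₀ (Ring.two_ne_zero (by rw [ZMod.ringChar_zmod_n]; omega))
  have hfac : (f.factorial : ZMod p) ≠ 0 := by
    rw [Ne, ZMod.natCast_eq_zero_iff, (Fact.out : p.Prime).dvd_factorial]
    omega
  have hbinom : (f.centralBinom : ZMod p) = (-4) ^ f * (3 * f).choose f := by
    refine mul_right_cancel₀ (pow_ne_zero 2 hfac) ?_
    have h := cast_factorial_two_mul_of_two_mul_add_one_eq_zero hcast f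
    rw [two_mul, ← Nat.add_choose_mul_factorial_mul_factorial f f, ← two_mul,
      ← Nat.centralBinom_eq_two_mul_choose] at h
    push_cast at h
    linear_combination h
  have hone : -(2⁻¹ : ZMod p) ^ 2 * -4 = 1 := by
    linear_combination (2 * 2⁻¹ + 1) * hhalf
  rw [aeval_half_shiftedLegendre_two_mul f hhalf, hbinom, ← mul_assoc, ← mul_pow, hone, one_pow,
    one_mul]

theorem aeval_half_shiftedLegendre_eq_neg_jacobsthalSum (hp : p % 6 = 1) :
    aeval (2⁻¹ : ZMod p) (shiftedLegendre (p / 3)) = (-jacobsthalSum 3 (1 : ZMod p) : ℤ) := by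
  obtain ⟨f, hf⟩ : ∃ f, p = 6 * f + 1 := ⟨p / 6, by omega⟩
  rw [show p / 3 = 2 * f by omega, aeval_half_shiftedLegendre_two_mul_eq_choose hf, Int.cast_neg,
    cast_jacobsthalSum_three ((ZMod.card p).trans hf), one_pow, mul_one, neg_neg]

end Prime

theorem stmt11 (p : ℕ) (hp : p.Prime) (hp5 : 5 < p) :
    (p % 6 = 5 →
      ratCongr p 1
        (∑ k ∈ Finset.range (p / 3 + 1),
          ((3 * k).factorial : ℚ) / (54 ^ k * (k.factorial : ℚ) ^ 3)) 0) ∧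
    (∀ A B : ℤ, p % 6 = 1 → (p : ℤ) = A ^ 2 + 3 * B ^ 2 → A % 3 = 1 →
      ratCongr p 1
        (∑ k ∈ Finset.range (p / 3 + 1),
          ((3 * k).factorial : ℚ) / (54 ^ k * (k.factorial : ℚ) ^ 3))
        (2 * (A : ℚ))) := by
  have : Fact p.Prime := ⟨hp⟩
  constructor
  · intro h5
    have hhalf : (2 : ZMod p) * 2⁻¹ = 1 :=
      mul_inv_cancel₀ (Ring.two_ne_zero (by rw [ZMod.ringChar_zmod_n]; omega))
    have hodd : Odd (p / 3) := Nat.odd_iff.2 (by omega)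
    exact_mod_cast ratCongr_sum_factorial_div (b := 0) (by omega) (by omega)
      ((aeval_half_shiftedLegendre_of_odd hodd hhalf).trans Int.cast_zero.symm)
  · intro A B h1 hAB hA
    obtain ⟨a, b, hS, ha, hab⟩ :=
      exists_jacobsthalSum_three_one_eq (F := ZMod p) (by rwa [ZMod.card p])
    rw [ZMod.card p] at hab
    have hsq : a ^ 2 = A ^ 2 :=
      sq_eq_sq_of_prime_eq_sq_add_mul_sq (Nat.prime_iff_prime_int.1 hp) (by decide) hab hAB
    obtain rfl : a = A := by
      obtain h | h := sq_eq_sq_iff_eq_or_eq_neg.1 hsq <;> omega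
    have hS' : -jacobsthalSum 3 (1 : ZMod p) = 2 * a := by rw [hS, neg_mul, neg_neg]
    exact_mod_cast ratCongr_sum_factorial_div (by omega) (by omega)
      ((aeval_half_shiftedLegendre_eq_neg_jacobsthalSum h1).trans (congrArg _ hS'))
end
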